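/- For every positive integer k: (i) for every complex s with Re s > 1, one has ζ(s)^k = s Σ_{j=0}^{k-1} a_{j,k}/(s-1)^{j+1} + s ∫_1^∞ Δ_k(x) x^{-s-1} dx, the integral converging absolutely; (ii) the series Σ_{n=0}^∞ (-1)^n ℓ_{n,k} ((s-1)/s)^n converges absolutely for every s with Re s > 1/2 and defines an analytic function there which, for Re s > 1, equals s ∫_1^∞ Δ_k(x) x^{-s-1} dx. -/

import Mathlib

open scoped Real Topology
open Complex Filter MeasureTheory Finset Asymptotics

/-- The analytic extension of `s ↦ ((s-1) * ζ(s))^k` to `s = 1` (where its value is `1`). -/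
noncomputable def zetaPowAux (k : ℕ) : ℂ → ℂ :=
  Function.update (fun s : ℂ => ((s - 1) * riemannZeta s) ^ k) 1 1

/-- `lam k j` is the Taylor coefficient `λ_{j,k}`, i.e. the `j`-th derivative at `s = 1` of the
analytic extension of `(s-1)^k ζ(s)^k`; these numbers are real, and we record their real part. -/
noncomputable def lam (k j : ℕ) : ℝ :=
  (iteratedDeriv j (zetaPowAux k) 1).re

/-- The Fourier coefficients `ℓ_{n,k}` for `n ≥ -k` (an integer index). -/
noncomputable def ell (k : ℕ) (n : ℤ) : ℝ :=
  if 1 ≤ n then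
    (-1 : ℝ) ^ n.toNat *
      ∑ j ∈ Finset.Icc 1 n.toNat,
        ((n.toNat - 1).choose (j - 1) : ℝ) * lam k (j + k) / (Nat.factorial (j + k))
  else
    (-1 : ℝ) ^ k *
      ∑ j ∈ Finset.range ((k + n).toNat + 1),
        ((k - j).choose (-n).toNat : ℝ) * (-1 : ℝ) ^ j * lam k j / (Nat.factorial j)

/-- The Lindelöf Hypothesis: `ζ(1/2 + it) = O(|t|^ε)` for every `ε > 0`. -/
def LindelofHypothesis : Prop :=
  ∀ ε : ℝ, 0 < ε → ∃ C : ℝ, ∀ t : ℝ, 1 ≤ |t| →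
    ‖riemannZeta (1 / 2 + t * Complex.I)‖ ≤ C * |t| ^ ε

/-- `dk k n` is the Piltz divisor function `d_k(n)`: the number of representations of `n` as an
ordered product of `k` positive integers (the `k`-th Dirichlet-convolution power of `ζ`). -/
noncomputable def dk (k n : ℕ) : ℕ := (ArithmeticFunction.zeta ^ k) n

/-- The coefficients `a_{j,k}` of the polynomial `P_k`. -/
noncomputable def aCoef (k j : ℕ) : ℝ :=
  (-1 : ℝ) ^ (k - 1 - j) *
    ∑ i ∈ Finset.range (k - 1 - j + 1), (-1 : ℝ) ^ i * lam k i / (Nat.factorial i)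

/-- The error term `Δ_k(x) = (Σ_{1 ≤ n ≤ x} d_k(n)) - x P_k(log x)` in the Piltz divisor
problem. -/
noncomputable def Deltak (k : ℕ) (x : ℝ) : ℝ :=
  (∑ n ∈ Finset.Icc 1 ⌊x⌋₊, (dk k n : ℝ)) -
    x * ∑ j ∈ Finset.range k, aCoef k j / (Nat.factorial j) * (Real.log x) ^ j

/-- The `n`-th Laguerre polynomial. -/
noncomputable def laguerre (n : ℕ) (u : ℝ) : ℝ :=
  ∑ j ∈ Finset.range (n + 1), (n.choose j : ℝ) * (-1 : ℝ) ^ j * u ^ j / (Nat.factorial j)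

/-- The Bessel function of the first kind of order `0`. -/
noncomputable def besselJ0 (u : ℝ) : ℝ :=
  ∑' m : ℕ, (-1 : ℝ) ^ m * (u / 2) ^ (2 * m) / ((Nat.factorial m : ℝ) ^ 2)

/-- `φ_k(x) = ∫_1^∞ Δ_k(r) J₀(2 √(x log r)) r⁻² dr`. -/
noncomputable def phik (k : ℕ) (x : ℝ) : ℝ :=
  ∫ r in Set.Ioi (1 : ℝ), Deltak k r * besselJ0 (2 * Real.sqrt (x * Real.log r)) / r ^ 2

/-!
Write `(s - 1) ^ k * ζ(s) ^ k = ∑ t_i * w ^ i` with `w = s - 1`; this function is entire. Dividing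
the Taylor polynomial of degree `k` by `1 + w = s` splits `ζ(s) ^ k` into
`s * ∑ j < k, a_{j,k} / w ^ (j + 1)` plus the entire function
`R(s) = ℓ_{0,k} + ∑ j ≥ 1, t_{k+j} * w ^ j`: both the `a_{j,k}` and `ℓ_{0,k}` are alternating
partial sums of the `t_i`.

With `z = (s - 1) / s` one has `w = z / (1 - z)`, so re-expanding `R` in powers of `z` is a binomial
transform of its coefficients, which gives the `(-1) ^ n * ℓ_{n,k}`; the double series involved
converges absolutely when `|z| < 1`, that is for `Re s > 1/2`.

On the other hand, Abel summation gives `ζ(s) ^ k = s * ∫ (∑ n ≤ x, d_k(n)) * x ^ (-s - 1) dx`, and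
after the substitution `x = exp u` the term `x * log x ^ j / j!` of the main term contributes
`∫ u ^ j / j! * exp (-(s - 1) * u) du = 1 / w ^ (j + 1)`. Hence `s` times the integral of
`Δ_k(x) * x ^ (-s - 1)` is `R(s)` as well.
-/

section BinomialTransform

/-- The binomial (Euler) transform of a sequence `d`: it turns a generating function `D` into
`(1 - z)⁻¹ * D (z / (1 - z))`. -/
def binomialTransform {R : Type*} [Semiring R] (d : ℕ → R) (n : ℕ) : R :=
  ∑ j ∈ range (n + 1), (n.choose j : R) * d j

/-- The double array `(j, m) ↦ d j * C(j + m, j) * z ^ (j + m)`, which sums along rows to the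
expansion of `d j * z ^ j / (1 - z) ^ (j + 1)` and along antidiagonals to the binomial transform
of `d`. -/
def binomialArray {R : Type*} [Semiring R] (d : ℕ → R) (z : R) (p : ℕ × ℕ) : R :=
  d p.1 * ((p.1 + p.2).choose p.1 : R) * z ^ (p.1 + p.2)

lemma sum_antidiagonal_binomialArray {R : Type*} [CommSemiring R] (d : ℕ → R) (z : R) (n : ℕ) :
    ∑ p ∈ antidiagonal n, binomialArray d z p = binomialTransform d n * z ^ n := by
  rw [Nat.sum_antidiagonal_eq_sum_range_succ_mk, binomialTransform, sum_mul]
  refine sum_congr rfl fun j hj => ?_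
  rw [binomialArray, Nat.add_sub_cancel' (mem_range_succ_iff.1 hj), mul_comm (d j)]

variable {𝕜 : Type*} [NormedField 𝕜] {d : ℕ → 𝕜} {z : 𝕜}

lemma norm_binomialArray_le (d : ℕ → 𝕜) (z : 𝕜) (p : ℕ × ℕ) :
    ‖binomialArray d z p‖ ≤ binomialArray (fun j => ‖d j‖) ‖z‖ p := by
  rw [binomialArray, norm_mul, norm_mul, norm_pow]
  exact mul_le_mul_of_nonneg_right
    (mul_le_mul_of_nonneg_left (by simpa using Nat.norm_cast_le (α := 𝕜) _) (norm_nonneg _))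
    (by positivity)

lemma hasSum_binomialArray_row [CompleteSpace 𝕜] (d : ℕ → 𝕜) (hz : ‖z‖ < 1) (j : ℕ) :
    HasSum (fun m => binomialArray d z (j, m)) ((1 - z)⁻¹ * (d j * (z / (1 - z)) ^ j)) := by
  have h := (hasSum_choose_mul_geometric_of_norm_lt_one j hz).mul_left (d j * z ^ j)
  have hval : d j * z ^ j * (1 / (1 - z) ^ (j + 1)) = (1 - z)⁻¹ * (d j * (z / (1 - z)) ^ j) := by
    rw [div_pow, pow_succ, one_div, mul_inv]
    ring
  rw [hval] at h
  refine h.congr_fun fun m => ?_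
  rw [binomialArray, pow_add, add_comm j m]
  ring

lemma summable_norm_binomialArray (hz : ‖z‖ < 1)
    (hd : Summable fun j => ‖d j‖ * (‖z‖ / (1 - ‖z‖)) ^ j) :
    Summable fun p => ‖binomialArray d z p‖ := by
  refine Summable.of_nonneg_of_le (fun _ => norm_nonneg _) (norm_binomialArray_le d z) ?_
  have hrow := hasSum_binomialArray_row (fun j => ‖d j‖) ((norm_norm z).trans_lt hz)
  refine (summable_prod_of_nonneg fun p => ?_).2 ⟨fun j => (hrow j).summable, ?_⟩
  · exact (norm_nonneg _).trans (norm_binomialArray_le d z p)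
  · simpa only [(hrow _).tsum_eq] using hd.mul_left (1 - ‖z‖)⁻¹

lemma summable_norm_binomialTransform_mul_pow (hz : ‖z‖ < 1)
    (hd : Summable fun j => ‖d j‖ * (‖z‖ / (1 - ‖z‖)) ^ j) :
    Summable fun n => ‖binomialTransform d n * z ^ n‖ := by
  have h := (HasAntidiagonal.sigmaAntidiagonalEquivProd (A := ℕ)).summable_iff.2
    (summable_norm_binomialArray hz hd)
  refine Summable.of_nonneg_of_le (fun _ => norm_nonneg _) (fun n => ?_) h.sigma
  rw [← sum_antidiagonal_binomialArray, tsum_fintype]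
  exact (norm_sum_le _ _).trans_eq
    (sum_coe_sort (antidiagonal n) fun p => ‖binomialArray d z p‖).symm

lemma hasSum_binomialTransform_mul_pow [CompleteSpace 𝕜] (hz : ‖z‖ < 1)
    (hd : Summable fun j => ‖d j‖ * (‖z‖ / (1 - ‖z‖)) ^ j) :
    HasSum (fun n => binomialTransform d n * z ^ n)
      ((1 - z)⁻¹ * ∑' j, d j * (z / (1 - z)) ^ j) := by
  have harray := (summable_norm_binomialArray hz hd).of_norm.hasSum
  have hrows := harray.prod_fiberwise (hasSum_binomialArray_row d hz)
  rw [← tsum_mul_left, hrows.tsum_eq]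
  refine (((HasAntidiagonal.sigmaAntidiagonalEquivProd (A := ℕ)).hasSum_iff.2 harray).sigma
    fun n => hasSum_fintype _).congr_fun fun n => ?_
  rw [← sum_antidiagonal_binomialArray]
  exact (sum_coe_sort (antidiagonal n) (binomialArray d z)).symm

end BinomialTransform

section AltPartialSum

variable {R : Type*} [CommRing R]

/-- The alternating partial sums `t m - t (m - 1) + ⋯ ± t 0`: the coefficients of the quotient of
the power series with coefficients `t` by `1 + w`. -/
def altPartialSum (t : ℕ → R) (m : ℕ) : R :=
  (-1) ^ m * ∑ i ∈ range (m + 1), (-1) ^ i * t i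

lemma altPartialSum_succ (t : ℕ → R) (m : ℕ) :
    altPartialSum t (m + 1) = t (m + 1) - altPartialSum t m := by
  have h : ((-1 : R) ^ m) * (-1) ^ m = 1 := by rw [← mul_pow, neg_one_mul, neg_neg, one_pow]
  rw [altPartialSum, altPartialSum, sum_range_succ _ (m + 1)]
  linear_combination t (m + 1) * h

lemma one_add_mul_sum_altPartialSum (t : ℕ → R) (w : R) (n : ℕ) :
    (1 + w) * ∑ m ∈ range n, altPartialSum t m * w ^ m + altPartialSum t n * w ^ n =
      ∑ i ∈ range (n + 1), t i * w ^ i := by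
  induction n with
  | zero => simp [altPartialSum]
  | succ n ih =>
    rw [sum_range_succ, sum_range_succ _ (n + 1), ← ih, altPartialSum_succ]
    ring

lemma sum_range_reflect_div_pow {K : Type*} [Field K] (b : ℕ → K) {w : K} (hw : w ≠ 0) (n : ℕ) :
    (∑ j ∈ range n, b (n - 1 - j) / w ^ (j + 1)) * w ^ n = ∑ m ∈ range n, b m * w ^ m := by
  rw [← sum_range_reflect, sum_mul]
  refine sum_congr rfl fun j hj => ?_
  have hjn : j < n := mem_range.1 hj
  rw [show n - 1 - (n - 1 - j) = j by omega, show n - 1 - j + 1 = n - j by omega,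
    pow_sub₀ w hw hjn.le]
  field_simp

end AltPartialSum

section PowerSeries

lemma summable_nat_add_mul_pow {𝕜 : Type*} [DivisionRing 𝕜] [TopologicalSpace 𝕜]
    [IsTopologicalRing 𝕜] {c : ℕ → 𝕜} {w : 𝕜}
    (hc : Summable fun j => c j * w ^ j) (m : ℕ) : Summable fun j => c (j + m) * w ^ j := by
  rcases eq_or_ne w 0 with rfl | hw
  · refine summable_of_ne_finset_zero (s := {0}) fun j hj => ?_
    rw [zero_pow (by simpa using hj), mul_zero]
  · refine (((summable_nat_add_iff m).2 hc).mul_right (w ^ m)⁻¹).congr fun j => ?_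
    rw [pow_add, ← mul_assoc, mul_inv_cancel_right₀ (pow_ne_zero m hw)]

lemma differentiable_tsum_mul_pow {c : ℕ → ℂ} (hc : ∀ w, Summable fun j => c j * w ^ j) :
    Differentiable ℂ fun w => ∑' j, c j * w ^ j := by
  intro w
  have hball : DifferentiableOn ℂ (fun w => ∑' j, c j * w ^ j) (Metric.ball 0 (‖w‖ + 1)) := by
    refine differentiableOn_tsum_of_summable_norm (u := fun j => ‖c j‖ * (‖w‖ + 1) ^ j) ?_
      (fun j => by fun_prop) Metric.isOpen_ball fun j v hv => ?_
    · have h := (hc ((‖w‖ + 1 : ℝ) : ℂ)).norm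
      simpa only [norm_mul, norm_pow, Complex.norm_of_nonneg (show 0 ≤ ‖w‖ + 1 by positivity)]
        using h
    · rw [norm_mul, norm_pow]
      gcongr
      exact (mem_ball_zero_iff.1 hv).le
  exact hball.differentiableAt (Metric.isOpen_ball.mem_nhds (by simp))

end PowerSeries

open ComplexConjugate in
lemma iteratedDeriv_conj_of_conj {𝕜 : Type*} [RCLike 𝕜] {f : 𝕜 → 𝕜}
    (hf : ∀ s, f (conj s) = conj (f s)) (j : ℕ) (s : 𝕜) :
    iteratedDeriv j f (conj s) = conj (iteratedDeriv j f s) := by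
  induction j generalizing s with
  | zero => simpa using hf s
  | succ j ih =>
    have h : conj ∘ iteratedDeriv j f ∘ conj = iteratedDeriv j f := by
      funext z
      simp [ih]
    have hderiv := congrFun (deriv_conj_conj (f := iteratedDeriv j f)) (conj s)
    rw [h] at hderiv
    simpa [iteratedDeriv_succ] using hderiv

section DirichletSeries

lemma LSeriesHasSum_pow {f : ArithmeticFunction ℂ} {s a : ℂ} (hf : LSeriesHasSum (f ·) s a)
    (k : ℕ) : LSeriesHasSum ((f ^ k) ·) s (a ^ k) := by
  induction k with
  | zero =>
    rw [pow_zero, pow_zero, ArithmeticFunction.one_eq_delta, LSeriesHasSum]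
    convert hasSum_ite_eq 1 (1 : ℂ) using 2 with n
    exact LSeries.term_delta s n
  | succ k ih =>
    rw [pow_succ, pow_succ]
    exact ArithmeticFunction.LSeriesHasSum_mul ih hf

variable {f : ℕ → ℂ} {s : ℂ}

lemma isBigO_sum_norm_of_LSeriesSummable (hs : 0 ≤ s.re) (hf : LSeriesSummable f s) :
    (fun n => ∑ i ∈ Icc 1 n, ‖f i‖) =O[atTop] fun n : ℕ => (n : ℝ) ^ s.re := by
  refine IsBigO.of_bound (∑' n, ‖LSeries.term f s n‖) (Eventually.of_forall fun n => ?_)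
  rw [Real.norm_of_nonneg (sum_nonneg fun _ _ => norm_nonneg _),
    Real.norm_of_nonneg (by positivity)]
  calc ∑ i ∈ Icc 1 n, ‖f i‖ ≤ ∑ i ∈ Icc 1 n, ‖LSeries.term f s i‖ * (n : ℝ) ^ s.re := by
        refine sum_le_sum fun i hi => ?_
        obtain ⟨hi, hin⟩ := mem_Icc.1 hi
        have hpos : (0 : ℝ) < i := by exact_mod_cast hi
        rw [LSeries.norm_term_eq, if_neg (by omega), div_mul_eq_mul_div,
          le_div_iff₀ (Real.rpow_pos_of_pos hpos _)]
        gcongr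
    _ ≤ _ := by
        rw [← sum_mul]
        gcongr
        exact hf.norm.sum_le_tsum _ fun _ _ => norm_nonneg _

lemma integrableOn_sum_Icc_floor_mul_cpow {r : ℝ} (hr : 0 ≤ r) (hrs : r < s.re)
    (hf : (fun n => ∑ i ∈ Icc 1 n, f i) =O[atTop] fun n : ℕ => (n : ℝ) ^ r) :
    IntegrableOn (fun x : ℝ => (∑ i ∈ Icc 1 ⌊x⌋₊, f i) * (x : ℂ) ^ (-s - 1)) (Set.Ioi 1) := by
  have hloc : LocallyIntegrableOn
      (fun x : ℝ => (∑ i ∈ Icc 1 ⌊x⌋₊, f i) * (x : ℂ) ^ (-s - 1)) (Set.Ici 1) := by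
    simp_rw [mul_comm]
    refine locallyIntegrableOn_mul_sum_Icc f zero_le_one
      (ContinuousOn.locallyIntegrableOn (fun x hx => ?_) measurableSet_Ici)
    exact (continuousAt_ofReal_cpow_const _ _
      (Or.inr (zero_lt_one.trans_le hx).ne')).continuousWithinAt
  have hfloor : (fun x : ℝ => ∑ i ∈ Icc 1 ⌊x⌋₊, f i) =O[atTop] fun x => x ^ r :=
    (hf.comp_tendsto tendsto_nat_floor_atTop).trans
      (isEquivalent_nat_floor.isBigO.rpow hr (eventually_ge_atTop 0))
  have hcpow : (fun x : ℝ => (x : ℂ) ^ (-s - 1)) =O[atTop] fun x => x ^ (-s.re - 1) := by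
    simpa using (norm_ofReal_cpow_eventually_eq_atTop (-s - 1)).isBigO.of_norm_left
  refine (hloc.integrableOn_of_isBigO_atTop
    (hfloor.mul_atTop_rpow_of_isBigO_rpow r (-s.re - 1) (r - s.re - 1) hcpow (by linarith))
    (integrableAtFilter_rpow_atTop_iff.2 (by linarith))).mono_set Set.Ioi_subset_Ici_self

variable {σ : ℂ}

lemma integrableOn_sum_Icc_floor_mul_cpow_of_LSeriesSummable (hσ : 0 ≤ σ.re)
    (hf : LSeriesSummable f σ) (hs : σ.re < s.re) :
    IntegrableOn (fun x : ℝ => (∑ i ∈ Icc 1 ⌊x⌋₊, f i) * (x : ℂ) ^ (-s - 1)) (Set.Ioi 1) :=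
  integrableOn_sum_Icc_floor_mul_cpow hσ hs <|
    (isBigO_of_le _ fun _ => (norm_sum_le _ _).trans (Real.le_norm_self _)).trans
      (isBigO_sum_norm_of_LSeriesSummable hσ hf)

lemma LSeries_eq_mul_integral_of_LSeriesSummable (hσ : 0 ≤ σ.re)
    (hf : LSeriesSummable f σ) (hs : σ.re < s.re) :
    LSeries f s =
      s * ∫ x in Set.Ioi (1 : ℝ), (∑ i ∈ Icc 1 ⌊x⌋₊, f i) * (x : ℂ) ^ (-s - 1) := by
  simpa only [neg_add'] using
    LSeries_eq_mul_integral' f hσ hs (isBigO_sum_norm_of_LSeriesSummable hσ hf)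

end DirichletSeries

section LogIntegral

lemma norm_pow_mul_exp_neg_mul (j : ℕ) (a : ℂ) {u : ℝ} (hu : 0 ≤ u) :
    ‖(u : ℂ) ^ j * cexp (-(a * u))‖ = u ^ j * Real.exp (-a.re * u) := by
  simp [Complex.norm_exp, abs_of_nonneg hu]

variable {a : ℂ}

lemma integrableOn_pow_mul_exp_neg_mul (j : ℕ) (ha : 0 < a.re) :
    IntegrableOn (fun u : ℝ => (u : ℂ) ^ j * cexp (-(a * u))) (Set.Ioi 0) := by
  have h := integrableOn_rpow_mul_exp_neg_mul_rpow (s := j) (p := 1)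
    (neg_one_lt_zero.trans_le j.cast_nonneg) zero_lt_one ha
  refine h.mono' (by fun_prop) ((ae_restrict_mem measurableSet_Ioi).mono fun u hu => ?_)
  rw [norm_pow_mul_exp_neg_mul j a (Set.mem_Ioi.1 hu).le, Real.rpow_one, Real.rpow_natCast]

lemma tendsto_pow_mul_exp_neg_mul (j : ℕ) (ha : 0 < a.re) :
    Tendsto (fun u : ℝ => (u : ℂ) ^ j * cexp (-(a * u))) atTop (𝓝 0) := by
  refine tendsto_zero_iff_norm_tendsto_zero.2
    ((tendsto_rpow_mul_exp_neg_mul_atTop_nhds_zero j _ ha).congr' ?_)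
  filter_upwards [eventually_ge_atTop 0] with u hu
  rw [norm_pow_mul_exp_neg_mul j a hu, Real.rpow_natCast]

lemma hasDerivAt_pow_succ_mul_exp_neg_mul (j : ℕ) (a : ℂ) (u : ℝ) :
    HasDerivAt (fun u : ℝ => (u : ℂ) ^ (j + 1) * cexp (-(a * u)))
      ((j + 1) * ((u : ℂ) ^ j * cexp (-(a * u))) -
        a * ((u : ℂ) ^ (j + 1) * cexp (-(a * u)))) u := by
  have hu := (hasDerivAt_id u).ofReal_comp
  refine ((hu.pow (j + 1)).mul ((hu.const_mul a).neg.cexp)).congr_deriv ?_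
  simp only [Nat.cast_add, Nat.cast_one, id_eq, add_tsub_cancel_right, ofReal_one, mul_one,
    Pi.neg_apply, Pi.pow_apply, mul_neg]
  ring

lemma integral_pow_mul_exp_neg_mul (j : ℕ) (ha : 0 < a.re) :
    ∫ u in Set.Ioi (0 : ℝ), (u : ℂ) ^ j * cexp (-(a * u)) = j.factorial / a ^ (j + 1) := by
  have ha0 : a ≠ 0 := ne_zero_of_re_pos ha
  induction j with
  | zero =>
    have h := integral_exp_mul_complex_Ioi (a := -a) (by simpa using ha) 0
    simpa using h
  | succ j ih =>
    have hj := (integrableOn_pow_mul_exp_neg_mul j ha).const_mul (j + 1 : ℂ)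
    have hj' := (integrableOn_pow_mul_exp_neg_mul (j + 1) ha).const_mul a
    have hparts := integral_Ioi_of_hasDerivAt_of_tendsto'
      (fun u _ => hasDerivAt_pow_succ_mul_exp_neg_mul j a u) (hj.sub hj')
      (tendsto_pow_mul_exp_neg_mul (j + 1) ha)
    rw [integral_sub hj hj', integral_const_mul, integral_const_mul, ih, ofReal_zero,
      zero_pow j.succ_ne_zero, zero_mul, sub_zero, sub_eq_zero] at hparts
    rw [eq_div_of_mul_eq ha0 ((mul_comm _ _).trans hparts.symm), Nat.factorial_succ]
    push_cast
    field_simp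
    ring

variable {s : ℂ}

lemma exp_smul_log_pow_mul_cpow (j : ℕ) (s : ℂ) (u : ℝ) :
    Real.exp u • ((Real.log (Real.exp u) : ℂ) ^ j * (Real.exp u : ℂ) ^ (-s)) =
      (u : ℂ) ^ j * cexp (-((s - 1) * u)) := by
  rw [Real.log_exp, real_smul, cpow_def_of_ne_zero (by simp), ← ofReal_log (Real.exp_pos u).le,
    Real.log_exp, ofReal_exp, mul_left_comm, ← Complex.exp_add]
  ring_nf

lemma integrableOn_log_pow_mul_cpow (j : ℕ) (hs : 1 < s.re) :
    IntegrableOn (fun x : ℝ => (Real.log x : ℂ) ^ j * (x : ℂ) ^ (-s)) (Set.Ioi 1) := by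
  rw [← Real.exp_zero, ← integrableOn_comp_exp_Ioi]
  simp_rw [exp_smul_log_pow_mul_cpow]
  exact integrableOn_pow_mul_exp_neg_mul j (by simpa using hs)

lemma integral_log_pow_mul_cpow (j : ℕ) (hs : 1 < s.re) :
    ∫ x in Set.Ioi (1 : ℝ), (Real.log x : ℂ) ^ j * (x : ℂ) ^ (-s) =
      j.factorial / (s - 1) ^ (j + 1) := by
  rw [← integral_pow_mul_exp_neg_mul j (a := s - 1) (by simpa using hs), ← Real.exp_zero,
    ← integral_comp_exp_Ioi]
  simp_rw [exp_smul_log_pow_mul_cpow]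

end LogIntegral

section ZetaPow

lemma natCast_dk (k n : ℕ) :
    (dk k n : ℂ) = ((ArithmeticFunction.zeta : ArithmeticFunction ℂ) ^ k) n := by
  induction k generalizing n with
  | zero => simp [dk, ArithmeticFunction.one_apply]
  | succ k ih =>
    simp only [dk, pow_succ, ArithmeticFunction.mul_apply, Nat.cast_sum, Nat.cast_mul] at ih ⊢
    simp_rw [ih, ArithmeticFunction.natCoe_apply]

lemma LSeriesHasSum_dk (k : ℕ) {s : ℂ} (hs : 1 < s.re) :
    LSeriesHasSum (fun n => (dk k n : ℂ)) s (riemannZeta s ^ k) := by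
  have hzeta : LSeriesHasSum ((ArithmeticFunction.zeta : ArithmeticFunction ℂ) ·) s
      (riemannZeta s) := by
    simpa only [ArithmeticFunction.natCoe_apply] using ArithmeticFunction.LSeriesHasSum_zeta hs
  simpa only [natCast_dk] using LSeriesHasSum_pow hzeta k

lemma zetaPowAux_of_ne_one (k : ℕ) {s : ℂ} (hs : s ≠ 1) :
    zetaPowAux k s = ((s - 1) * riemannZeta s) ^ k :=
  Function.update_of_ne hs _ _

lemma zetaPowAux_eq_riemannZeta₁_pow (k : ℕ) : zetaPowAux k = fun s => riemannZeta₁ s ^ k := by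
  funext s
  rcases eq_or_ne s 1 with rfl | hs
  · rw [zetaPowAux, Function.update_self, riemannZeta₁_one, one_pow]
  · rw [zetaPowAux_of_ne_one k hs, riemannZeta_eq_inv_sub_mul hs,
      mul_inv_cancel_left₀ (sub_ne_zero.2 hs)]

lemma differentiable_zetaPowAux (k : ℕ) : Differentiable ℂ (zetaPowAux k) := by
  rw [zetaPowAux_eq_riemannZeta₁_pow]
  exact differentiable_riemannZeta₁.pow k

open ComplexConjugate in
lemma zetaPowAux_conj (k : ℕ) (s : ℂ) : zetaPowAux k (conj s) = conj (zetaPowAux k s) := by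
  rcases eq_or_ne s 1 with rfl | hs
  · simp [zetaPowAux]
  · have hconj : conj s ≠ 1 := fun h => hs (by simpa using congrArg conj h)
    simp [zetaPowAux_of_ne_one k hs, zetaPowAux_of_ne_one k hconj, riemannZeta_conj]

lemma ofReal_lam (k j : ℕ) : (lam k j : ℂ) = iteratedDeriv j (zetaPowAux k) 1 := by
  rw [lam, ← conj_eq_iff_re, ← iteratedDeriv_conj_of_conj (zetaPowAux_conj k), map_one]

/-- The coefficient `λ_{j,k} / j!` of `(s - 1) ^ j` in the Taylor expansion of
`(s - 1) ^ k * ζ(s) ^ k` at `1`, as a complex number. -/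
noncomputable def taylorCoef (k j : ℕ) : ℂ := lam k j / j.factorial

lemma hasSum_taylorCoef_mul_pow (k : ℕ) (w : ℂ) :
    HasSum (fun j => taylorCoef k j * w ^ j) (zetaPowAux k (1 + w)) := by
  refine (hasSum_taylorSeries_of_entire (differentiable_zetaPowAux k) 1 (1 + w)).congr_fun
    fun j => ?_
  rw [taylorCoef, ofReal_lam, add_sub_cancel_left, smul_eq_mul, smul_eq_mul]
  ring

lemma summable_taylorCoef_add_mul_pow (k m : ℕ) (w : ℂ) :
    Summable fun j => taylorCoef k (j + m) * w ^ j :=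
  summable_nat_add_mul_pow (hasSum_taylorCoef_mul_pow k w).summable m

lemma ofReal_aCoef (k j : ℕ) : (aCoef k j : ℂ) = altPartialSum (taylorCoef k) (k - 1 - j) := by
  simp [aCoef, altPartialSum, taylorCoef, mul_div_assoc]

lemma ofReal_ell_zero (k : ℕ) : (ell k 0 : ℂ) = altPartialSum (taylorCoef k) k := by
  simp [ell, altPartialSum, taylorCoef, mul_div_assoc]

lemma neg_one_pow_mul_ell_succ (k n : ℕ) :
    (-1 : ℂ) ^ (n + 1) * ell k (n + 1 : ℕ) =
      binomialTransform (fun j => taylorCoef k (j + (k + 1))) n := by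
  have hsign : (-1 : ℂ) ^ (n + 1) * (-1) ^ (n + 1) = 1 := by rw [← mul_pow]; simp
  rw [ell, if_pos (by omega), Int.toNat_natCast, ofReal_mul, ofReal_pow, ofReal_neg, ofReal_one,
    ← mul_assoc, hsign, one_mul, ← Ico_succ_right_eq_Icc, sum_Ico_eq_sum_range, ofReal_sum]
  refine sum_congr (by simp) fun j _ => ?_
  rw [show 1 + j - 1 = j by omega, show 1 + j + k = j + (k + 1) by omega]
  simp [taylorCoef, mul_div_assoc]

end ZetaPow

section RegularPart

/-- The entire function which agrees with `ζ(s) ^ k - s * ∑ j < k, a_{j,k} / (s - 1) ^ (j + 1)`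
away from `s = 1`, written as a power series in `s - 1`. -/
noncomputable def zetaPowRegularPart (k : ℕ) (s : ℂ) : ℂ :=
  ell k 0 + (s - 1) * ∑' j, taylorCoef k (j + (k + 1)) * (s - 1) ^ j

lemma differentiable_zetaPowRegularPart (k : ℕ) : Differentiable ℂ (zetaPowRegularPart k) := by
  have h := (differentiable_tsum_mul_pow (summable_taylorCoef_add_mul_pow k (k + 1))).comp
    (differentiable_id.sub_const 1)
  exact ((differentiable_id.sub_const 1).mul h).const_add _

lemma zeta_pow_eq_add_zetaPowRegularPart (k : ℕ) {s : ℂ} (hs : s ≠ 1) :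
    riemannZeta s ^ k =
      s * ∑ j ∈ range k, (aCoef k j : ℂ) / (s - 1) ^ (j + 1) + zetaPowRegularPart k s := by
  obtain ⟨w, rfl⟩ : ∃ w, s = 1 + w := ⟨s - 1, by ring⟩
  have hw : w ≠ 0 := by simpa using hs
  have htaylor := hasSum_taylorCoef_mul_pow k w
  have htail := htaylor.summable.sum_add_tsum_nat_add (k + 1)
  rw [htaylor.tsum_eq, ← one_add_mul_sum_altPartialSum, ← sum_range_reflect_div_pow _ hw,
    zetaPowAux_of_ne_one k hs, add_sub_cancel_left, mul_pow] at htail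
  simp_rw [pow_add _ _ (k + 1), ← mul_assoc, tsum_mul_right, ← ofReal_aCoef, ← ofReal_ell_zero]
    at htail
  rw [zetaPowRegularPart, add_sub_cancel_left]
  refine mul_left_cancel₀ (pow_ne_zero k hw) ?_
  linear_combination -htail

lemma norm_sub_one_div_self_lt_one {s : ℂ} (hs : 1 / 2 < s.re) : ‖(s - 1) / s‖ < 1 := by
  have hs0 : s ≠ 0 := ne_zero_of_re_pos (by linarith)
  rw [norm_div, div_lt_one (norm_pos_iff.2 hs0), ← sq_lt_sq₀ (norm_nonneg _) (norm_nonneg _),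
    Complex.sq_norm, Complex.sq_norm, normSq_apply, normSq_apply, sub_re, sub_im, one_re, one_im]
  nlinarith

lemma summable_norm_taylorCoef_add_mul_pow (k m : ℕ) {x : ℝ} (hx : 0 ≤ x) :
    Summable fun j => ‖taylorCoef k (j + m)‖ * x ^ j := by
  simpa only [norm_mul, norm_pow, Complex.norm_of_nonneg hx] using
    (summable_taylorCoef_add_mul_pow k m x).norm

lemma neg_one_pow_mul_ell_succ_mul_pow (k n : ℕ) (z : ℂ) :
    (-1 : ℂ) ^ (n + 1) * ell k (n + 1 : ℕ) * z ^ (n + 1) =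
      binomialTransform (fun j => taylorCoef k (j + (k + 1))) n * z ^ n * z := by
  rw [neg_one_pow_mul_ell_succ, pow_succ z, mul_assoc]

lemma summable_norm_ell_mul_pow (k : ℕ) {z : ℂ} (hz : ‖z‖ < 1) :
    Summable fun n : ℕ => ‖(-1 : ℂ) ^ n * (ell k n : ℂ) * z ^ n‖ := by
  rw [← summable_nat_add_iff 1]
  simp_rw [neg_one_pow_mul_ell_succ_mul_pow, norm_mul _ z]
  exact (summable_norm_binomialTransform_mul_pow hz (summable_norm_taylorCoef_add_mul_pow k _
    (div_nonneg (norm_nonneg z) (sub_pos.2 hz).le))).mul_right ‖z‖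

lemma tsum_ell_mul_pow (k : ℕ) {s : ℂ} (hs : 1 / 2 < s.re) :
    ∑' n : ℕ, (-1 : ℂ) ^ n * (ell k n : ℂ) * ((s - 1) / s) ^ n = zetaPowRegularPart k s := by
  have hs0 : s ≠ 0 := ne_zero_of_re_pos (by linarith)
  have hz := norm_sub_one_div_self_lt_one hs
  have hinv : (1 - (s - 1) / s)⁻¹ = s := by
    field_simp
    simp
  have htransform := hasSum_binomialTransform_mul_pow hz (summable_norm_taylorCoef_add_mul_pow k
    (k + 1) (div_nonneg (norm_nonneg ((s - 1) / s)) (sub_pos.2 hz).le))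
  rw [div_eq_mul_inv _ (1 - _), hinv, div_mul_cancel₀ _ hs0] at htransform
  rw [(summable_norm_ell_mul_pow k hz).of_norm.tsum_eq_zero_add]
  simp_rw [neg_one_pow_mul_ell_succ_mul_pow]
  rw [tsum_mul_right, htransform.tsum_eq, zetaPowRegularPart, mul_right_comm s,
    mul_div_cancel₀ _ hs0]
  simp

end RegularPart

section PiltzErrorTerm

lemma Deltak_mul_cpow_eq_sub (k : ℕ) (s : ℂ) {x : ℝ} (hx : x ≠ 0) :
    (Deltak k x : ℂ) * (x : ℂ) ^ (-s - 1) =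
      (∑ n ∈ Icc 1 ⌊x⌋₊, (dk k n : ℂ)) * (x : ℂ) ^ (-s - 1) -
        ∑ j ∈ range k, (aCoef k j / j.factorial : ℂ) *
          ((Real.log x : ℂ) ^ j * (x : ℂ) ^ (-s)) := by
  have hpow : (x : ℂ) ^ (-s) = x * (x : ℂ) ^ (-s - 1) := by
    rw [cpow_sub _ _ (ofReal_ne_zero.2 hx), cpow_one, mul_div_cancel₀ _ (ofReal_ne_zero.2 hx)]
  simp_rw [Deltak, hpow, ← mul_assoc, ← sum_mul]
  push_cast
  ring

variable {s : ℂ}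

lemma integrableOn_sum_dk_mul_cpow (k : ℕ) (hs : 1 < s.re) :
    IntegrableOn (fun x : ℝ => (∑ n ∈ Icc 1 ⌊x⌋₊, (dk k n : ℂ)) * (x : ℂ) ^ (-s - 1))
      (Set.Ioi 1) := by
  obtain ⟨σ, hσ, hσs⟩ := exists_between hs
  exact integrableOn_sum_Icc_floor_mul_cpow_of_LSeriesSummable (σ := σ) (zero_lt_one.trans hσ).le
    (LSeriesHasSum_dk k hσ).LSeriesSummable hσs

lemma zeta_pow_eq_mul_integral_sum_dk (k : ℕ) (hs : 1 < s.re) :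
    riemannZeta s ^ k =
      s * ∫ x in Set.Ioi (1 : ℝ), (∑ n ∈ Icc 1 ⌊x⌋₊, (dk k n : ℂ)) * (x : ℂ) ^ (-s - 1) := by
  obtain ⟨σ, hσ, hσs⟩ := exists_between hs
  rw [← (LSeriesHasSum_dk k hs).LSeries_eq]
  exact LSeries_eq_mul_integral_of_LSeriesSummable (σ := σ) (zero_lt_one.trans hσ).le
    (LSeriesHasSum_dk k hσ).LSeriesSummable hσs

lemma integrableOn_aCoef_mul_log_pow (k j : ℕ) (hs : 1 < s.re) :
    IntegrableOn (fun x : ℝ => (aCoef k j / j.factorial : ℂ) *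
      ((Real.log x : ℂ) ^ j * (x : ℂ) ^ (-s))) (Set.Ioi 1) :=
  (integrableOn_log_pow_mul_cpow j hs).const_mul _

lemma integrableOn_Deltak_mul_cpow (k : ℕ) (hs : 1 < s.re) :
    IntegrableOn (fun x : ℝ => (Deltak k x : ℂ) * (x : ℂ) ^ (-s - 1)) (Set.Ioi 1) :=
  ((integrableOn_sum_dk_mul_cpow k hs).sub
    (integrable_finsetSum _ fun j _ => integrableOn_aCoef_mul_log_pow k j hs)).congr_fun
    (fun _ hx => (Deltak_mul_cpow_eq_sub k s (zero_lt_one.trans hx).ne').symm) measurableSet_Ioi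

lemma integral_aCoef_mul_log_pow (k j : ℕ) (hs : 1 < s.re) :
    ∫ x in Set.Ioi (1 : ℝ), (aCoef k j / j.factorial : ℂ) *
      ((Real.log x : ℂ) ^ j * (x : ℂ) ^ (-s)) = aCoef k j / (s - 1) ^ (j + 1) := by
  rw [integral_const_mul, integral_log_pow_mul_cpow j hs, ← mul_div_assoc,
    div_mul_cancel₀ _ (Nat.cast_ne_zero.2 j.factorial_ne_zero)]

lemma zeta_pow_eq_add_mul_integral_Deltak (k : ℕ) (hs : 1 < s.re) :
    riemannZeta s ^ k =
      s * (∑ j ∈ range k, (aCoef k j : ℂ) / (s - 1) ^ (j + 1)) +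
        s * ∫ x in Set.Ioi (1 : ℝ), (Deltak k x : ℂ) * (x : ℂ) ^ (-s - 1) := by
  have hlog : ∀ j ∈ range k, IntegrableOn (fun x : ℝ => (aCoef k j / j.factorial : ℂ) *
      ((Real.log x : ℂ) ^ j * (x : ℂ) ^ (-s))) (Set.Ioi 1) :=
    fun j _ => integrableOn_aCoef_mul_log_pow k j hs
  rw [setIntegral_congr_fun measurableSet_Ioi
      fun x hx => Deltak_mul_cpow_eq_sub k s (zero_lt_one.trans hx).ne',
    integral_sub (integrableOn_sum_dk_mul_cpow k hs) (integrable_finsetSum _ hlog),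
    integral_finsetSum _ hlog, sum_congr rfl fun j _ => integral_aCoef_mul_log_pow k j hs,
    mul_sub, ← zeta_pow_eq_mul_integral_sum_dk k hs, add_sub_cancel]

end PiltzErrorTerm

theorem stmt19 (k : ℕ) (hk : 0 < k) :
    (∀ s : ℂ, 1 < s.re →
      IntegrableOn (fun x : ℝ => (Deltak k x : ℂ) * (x : ℂ) ^ (-s - 1)) (Set.Ioi 1) ∧
      riemannZeta s ^ k =
        s * (∑ j ∈ Finset.range k, (aCoef k j : ℂ) / (s - 1) ^ (j + 1)) +
          s * ∫ x in Set.Ioi (1 : ℝ), (Deltak k x : ℂ) * (x : ℂ) ^ (-s - 1)) ∧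
    (∀ s : ℂ, 1 / 2 < s.re →
      Summable fun n : ℕ => ‖(-1 : ℂ) ^ n * (ell k n : ℂ) * ((s - 1) / s) ^ n‖) ∧
    DifferentiableOn ℂ
      (fun s : ℂ => ∑' n : ℕ, (-1 : ℂ) ^ n * (ell k n : ℂ) * ((s - 1) / s) ^ n)
      {s : ℂ | 1 / 2 < s.re} ∧
    (∀ s : ℂ, 1 < s.re →
      ∑' n : ℕ, (-1 : ℂ) ^ n * (ell k n : ℂ) * ((s - 1) / s) ^ n =
        s * ∫ x in Set.Ioi (1 : ℝ), (Deltak k x : ℂ) * (x : ℂ) ^ (-s - 1)) := by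
  refine ⟨fun s hs => ⟨integrableOn_Deltak_mul_cpow k hs,
    zeta_pow_eq_add_mul_integral_Deltak k hs⟩,
    fun s hs => summable_norm_ell_mul_pow k (norm_sub_one_div_self_lt_one hs),
    (differentiable_zetaPowRegularPart k).differentiableOn.congr fun s hs => tsum_ell_mul_pow k hs,
    fun s hs => ?_⟩
  have hne : s ≠ 1 := by
    rintro rfl
    exact lt_irrefl 1 hs
  rw [tsum_ell_mul_pow k (by linarith)]
  exact add_left_cancel <|
    (zeta_pow_eq_add_zetaPowRegularPart k hne).symm.trans (zeta_pow_eq_add_mul_integral_Deltak k hs)
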